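/- There exists an absolute constant C₁ > 0 such that for every 1 < p < ∞, every n ∈ ℕ, and every f : C_n → ℝ, one has −E(Δf · |f|^{p−1} sgn(f)) ≥ C₁ · c_p · E|f|^p − 2^{p/2} · c_p · |E f|^p, where c_p = 2·min(1/p, 1/p′) and p′ = p/(p−1). -/

import Mathlib

open Finset MeasureTheory Real

noncomputable section

/-- Expectation on the Hamming cube `{-1,1}^n`, modeled as `Fin n → Bool`
(`true ↔ 1`, `false ↔ -1`), with the uniform probability measure. -/
def cubeE {n : ℕ} (f : (Fin n → Bool) → ℝ) : ℝ :=
  (∑ x : Fin n → Bool, f x) / 2 ^ n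

/-- The Walsh monomial `x^S = ∏_{i ∈ S} x_i`. -/
def walsh {n : ℕ} (S : Finset (Fin n)) (x : Fin n → Bool) : ℝ :=
  ∏ i ∈ S, (if x i then (1 : ℝ) else -1)

/-- Fourier coefficient `f̂(S) = E (f · x^S)`. -/
def cubeFourier {n : ℕ} (f : (Fin n → Bool) → ℝ) (S : Finset (Fin n)) : ℝ :=
  cubeE fun x => f x * walsh S x

/-- The heat semigroup `e^{tΔ} f = Σ_S e^{-t|S|} f̂(S) x^S`. -/
def heat1 {n : ℕ} (t : ℝ) (f : (Fin n → Bool) → ℝ) : (Fin n → Bool) → ℝ :=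
  fun x => ∑ S : Finset (Fin n), Real.exp (-t * (S.card : ℝ)) * cubeFourier f S * walsh S x

/-- The fractional heat semigroup `e^{tΔ_γ} f = Σ_S e^{-t|S|^γ} f̂(S) x^S`. -/
def heatFrac {n : ℕ} (γ t : ℝ) (f : (Fin n → Bool) → ℝ) : (Fin n → Bool) → ℝ :=
  fun x => ∑ S : Finset (Fin n), Real.exp (-t * (S.card : ℝ) ^ γ) * cubeFourier f S * walsh S x

/-- The Laplacian `Δf = -Σ_S |S| f̂(S) x^S`. -/
def lap {n : ℕ} (f : (Fin n → Bool) → ℝ) : (Fin n → Bool) → ℝ :=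
  fun x => -∑ S : Finset (Fin n), (S.card : ℝ) * cubeFourier f S * walsh S x

/-- The fractional Laplacian `Δ_γ f = -Σ_S |S|^γ f̂(S) x^S`. -/
def fracLap {n : ℕ} (γ : ℝ) (f : (Fin n → Bool) → ℝ) : (Fin n → Bool) → ℝ :=
  fun x => -∑ S : Finset (Fin n), (S.card : ℝ) ^ γ * cubeFourier f S * walsh S x

/-- The discrete partial derivative `∇_j f`. -/
def cubeGrad {n : ℕ} (j : Fin n) (f : (Fin n → Bool) → ℝ) (x : Fin n → Bool) : ℝ :=
  (f (Function.update x j true) - f (Function.update x j false)) / 2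

/-- The squared length of the discrete gradient, `|∇f|²(x) = Σ_j |∇_j f(x)|²`. -/
def gradSq {n : ℕ} (f : (Fin n → Bool) → ℝ) (x : Fin n → Bool) : ℝ :=
  ∑ j : Fin n, (cubeGrad j f x) ^ 2

/-- The `L^p` norm `‖f‖_p = (E|f|^p)^{1/p}` on the Hamming cube. -/
def pNorm {n : ℕ} (p : ℝ) (f : (Fin n → Bool) → ℝ) : ℝ :=
  (cubeE fun x => |f x| ^ p) ^ (1 / p)

def flp {n : ℕ} (j : Fin n) (x : Fin n → Bool) : Fin n → Bool :=
  Function.update x j (!x j)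

lemma flp_flp {n : ℕ} (j : Fin n) (x : Fin n → Bool) : flp j (flp j x) = x := by
  funext i
  by_cases h : i = j
  · subst h; simp [flp]
  · simp [flp, h]

lemma sum_flp {n : ℕ} (j : Fin n) (F : (Fin n → Bool) → ℝ) :
    ∑ x, F (flp j x) = ∑ x, F x :=
  Equiv.sum_comp (Function.Involutive.toPerm (flp j) (flp_flp j)) F

lemma walsh_flp {n : ℕ} (j : Fin n) (S : Finset (Fin n)) (x : Fin n → Bool) :
    walsh S (flp j x) = (if j ∈ S then -1 else 1) * walsh S x := by
  unfold walsh
  by_cases h : j ∈ S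
  · rw [if_pos h, ← Finset.mul_prod_erase S _ h, ← Finset.mul_prod_erase S _ h]
    have : ∏ i ∈ S.erase j, (if flp j x i then (1 : ℝ) else -1)
        = ∏ i ∈ S.erase j, (if x i then (1 : ℝ) else -1) := by
      apply Finset.prod_congr rfl
      intro i hi
      simp [flp, Finset.ne_of_mem_erase hi]
    rw [this]
    cases hx : x j <;> simp [flp, hx]
  · rw [if_neg h, one_mul]
    apply Finset.prod_congr rfl
    intro i hi
    have : i ≠ j := fun e => h (e ▸ hi)
    simp [flp, this]

lemma sum_walsh {n : ℕ} (x y : Fin n → Bool) :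
    ∑ S : Finset (Fin n), walsh S y * walsh S x = if y = x then (2 : ℝ) ^ n else 0 := by
  have h : ∑ S : Finset (Fin n), walsh S y * walsh S x =
      ∏ i : Fin n, (1 + (if y i then (1 : ℝ) else -1) * (if x i then (1 : ℝ) else -1)) := by
    rw [Finset.prod_one_add]
    simp only [walsh, Finset.prod_mul_distrib, Finset.powerset_univ]
  rw [h]
  split_ifs with e
  · subst e
    have : ∀ i : Fin n, (1 + (if y i then (1 : ℝ) else -1) * (if y i then (1 : ℝ) else -1)) = 2 := by
      intro i; cases y i <;> norm_num
    rw [Finset.prod_congr rfl fun i _ => this i]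
    simp
  · obtain ⟨i, hi⟩ := Function.ne_iff.mp e
    apply Finset.prod_eq_zero (Finset.mem_univ i)
    cases hy : y i <;> cases hx : x i <;> simp_all

lemma inversion {n : ℕ} (f : (Fin n → Bool) → ℝ) (x : Fin n → Bool) :
    ∑ S : Finset (Fin n), cubeFourier f S * walsh S x = f x := by
  have : ∀ S : Finset (Fin n), cubeFourier f S * walsh S x
      = ∑ y, (f y / 2 ^ n) * (walsh S y * walsh S x) := by
    intro S
    unfold cubeFourier cubeE
    rw [Finset.sum_div, Finset.sum_mul]
    apply Finset.sum_congr rfl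
    intros; ring
  simp_rw [this]
  rw [Finset.sum_comm]
  simp_rw [← Finset.mul_sum, sum_walsh]
  simp

lemma lap_eq {n : ℕ} (f : (Fin n → Bool) → ℝ) (x : Fin n → Bool) :
    -lap f x = ∑ j, (f x - f (flp j x)) / 2 := by
  have h : ∀ j, (f x - f (flp j x)) / 2
      = ∑ S : Finset (Fin n), (if j ∈ S then (1 : ℝ) else 0) * (cubeFourier f S * walsh S x) := by
    intro j
    rw [← inversion f x, ← inversion f (flp j x), ← Finset.sum_sub_distrib, Finset.sum_div]
    apply Finset.sum_congr rfl
    intro S _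
    rw [walsh_flp]
    split_ifs <;> ring
  simp_rw [h]
  rw [Finset.sum_comm]
  unfold lap
  rw [neg_neg]
  apply Finset.sum_congr rfl
  intro S _
  rw [← Finset.sum_mul]
  simp [mul_assoc]

lemma dirichlet {n : ℕ} (f h : (Fin n → Bool) → ℝ) :
    -cubeE (fun x => lap f x * h x)
      = (∑ j, ∑ x, (f x - f (flp j x)) * (h x - h (flp j x)) / 4) / 2 ^ n := by
  unfold cubeE
  rw [← neg_div, ← Finset.sum_neg_distrib]
  congr 1
  have h1 : ∀ x, -(lap f x * h x) = ∑ j, (f x - f (flp j x)) / 2 * h x := by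
    intro x
    rw [← neg_mul, lap_eq, Finset.sum_mul]
  simp_rw [h1]
  rw [Finset.sum_comm]
  apply Finset.sum_congr rfl
  intro j _
  have h2 := sum_flp j (fun x => (f x - f (flp j x)) / 2 * h x)
  simp only [flp_flp] at h2
  have h3 : ∑ x, (f x - f (flp j x)) * (h x - h (flp j x)) / 4 =
      (∑ x, (f x - f (flp j x)) / 2 * h x
        + ∑ x, (f (flp j x) - f x) / 2 * h (flp j x)) / 2 := by
    rw [← Finset.sum_add_distrib, Finset.sum_div]
    apply Finset.sum_congr rfl
    intros; ring
  rw [h3, h2]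
  ring

lemma cubeE_sum {n : ℕ} {ι : Type*} (s : Finset ι) (F : ι → (Fin n → Bool) → ℝ) :
    cubeE (fun x => ∑ i ∈ s, F i x) = ∑ i ∈ s, cubeE (F i) := by
  unfold cubeE
  rw [Finset.sum_comm, Finset.sum_div]

lemma cubeE_mul {n : ℕ} (c : ℝ) (F : (Fin n → Bool) → ℝ) :
    cubeE (fun x => c * F x) = c * cubeE F := by
  unfold cubeE
  rw [← Finset.mul_sum, mul_div_assoc]

lemma cubeE_add {n : ℕ} (F G : (Fin n → Bool) → ℝ) :
    cubeE (fun x => F x + G x) = cubeE F + cubeE G := by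
  unfold cubeE
  rw [Finset.sum_add_distrib, add_div]

lemma cubeE_const {n : ℕ} (c : ℝ) : cubeE (fun _ : Fin n → Bool => c) = c := by
  unfold cubeE
  simp

lemma cubeE_mono {n : ℕ} {F G : (Fin n → Bool) → ℝ} (h : ∀ x, F x ≤ G x) :
    cubeE F ≤ cubeE G := by
  unfold cubeE
  exact div_le_div_of_nonneg_right (Finset.sum_le_sum fun x _ => h x) (by positivity)

lemma poincare {n : ℕ} (g : (Fin n → Bool) → ℝ) :
    cubeE (fun x => g x ^ 2) - (cubeE g) ^ 2 ≤ -cubeE (fun x => lap g x * g x) := by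
  have h1 : cubeE (fun x => g x ^ 2) = ∑ S : Finset (Fin n), cubeFourier g S ^ 2 := by
    have : (fun x => g x ^ 2) = fun x => ∑ S : Finset (Fin n),
        cubeFourier g S * (g x * walsh S x) := by
      funext x
      have := inversion g x
      calc g x ^ 2 = g x * g x := by ring
        _ = g x * ∑ S : Finset (Fin n), cubeFourier g S * walsh S x := by rw [this]
        _ = _ := by rw [Finset.mul_sum]; exact Finset.sum_congr rfl (by intros; ring)
    rw [this, cubeE_sum]
    apply Finset.sum_congr rfl
    intro S _
    rw [cubeE_mul, sq]
    rfl
  have h2 : -cubeE (fun x => lap g x * g x)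
      = ∑ S : Finset (Fin n), (S.card : ℝ) * cubeFourier g S ^ 2 := by
    have : (fun x => lap g x * g x) = fun x => ∑ S : Finset (Fin n),
        (-((S.card : ℝ) * cubeFourier g S)) * (g x * walsh S x) := by
      funext x
      unfold lap
      rw [← Finset.sum_neg_distrib, Finset.sum_mul]
      exact Finset.sum_congr rfl (by intros; ring)
    rw [this, cubeE_sum, ← Finset.sum_neg_distrib]
    apply Finset.sum_congr rfl
    intro S _
    rw [cubeE_mul]
    change -(-((S.card : ℝ) * cubeFourier g S) * cubeFourier g S) = _
    ring
  have h3 : cubeE g = cubeFourier g ∅ := by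
    simp [cubeFourier, walsh]
  rw [h1, h2, h3, sub_le_iff_le_add]
  have h4 : cubeFourier g ∅ ^ 2
      = ∑ S : Finset (Fin n), if S = ∅ then cubeFourier g S ^ 2 else 0 := by simp
  rw [h4, ← Finset.sum_add_distrib]
  apply Finset.sum_le_sum
  intro S _
  split_ifs with e
  · subst e; simp
  · have : (1 : ℝ) ≤ S.card := by
      exact_mod_cast Finset.card_pos.mpr (Finset.nonempty_iff_ne_empty.mpr e)
    nlinarith [sq_nonneg (cubeFourier g S)]

/-- signed power -/
def sp (r x : ℝ) : ℝ := |x| ^ r * Real.sign x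

lemma sp_mul (r x y : ℝ) : sp r (x * y) = sp r x * sp r y := by
  unfold sp
  rw [abs_mul, Real.mul_rpow (abs_nonneg _) (abs_nonneg _)]
  have hs : Real.sign (x * y) = Real.sign x * Real.sign y := by
    rcases lt_trichotomy x 0 with h | h | h <;> rcases lt_trichotomy y 0 with k | k | k
    · rw [Real.sign_of_neg h, Real.sign_of_neg k, Real.sign_of_pos (mul_pos_of_neg_of_neg h k)]
      norm_num
    · simp [k]
    · rw [Real.sign_of_neg h, Real.sign_of_pos k, Real.sign_of_neg (mul_neg_of_neg_of_pos h k)]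
      norm_num
    · simp [h]
    · simp [h]
    · simp [h]
    · rw [Real.sign_of_pos h, Real.sign_of_neg k, Real.sign_of_neg (mul_neg_of_pos_of_neg h k)]
      norm_num
    · simp [k]
    · rw [Real.sign_of_pos h, Real.sign_of_pos k, Real.sign_of_pos (mul_pos h k)]
      norm_num
  rw [hs]
  ring

lemma sp_of_pos {r x : ℝ} (h : 0 < x) : sp r x = x ^ r := by
  simp [sp, abs_of_pos h, Real.sign_of_pos h]

lemma sp_zero (r : ℝ) : sp r 0 = 0 := by simp [sp]

lemma sp_neg (r x : ℝ) : sp r (-x) = -sp r x := by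
  simp [sp, Real.sign_neg]

lemma sp_one (x : ℝ) : sp 1 x = x := by
  rcases lt_trichotomy x 0 with h | h | h
  · simp [sp, abs_of_neg h, Real.sign_of_neg h]
  · simp [h, sp_zero]
  · simp [sp_of_pos h]

lemma sp_sp (r q x : ℝ) : sp r (sp q x) = sp (q * r) x := by
  have key : ∀ x : ℝ, 0 < x → sp r (sp q x) = sp (q * r) x := by
    intro x h
    rw [sp_of_pos h, sp_of_pos h, sp_of_pos (Real.rpow_pos_of_pos h q), Real.rpow_mul h.le]
  rcases lt_trichotomy x 0 with h | h | h
  · have := key (-x) (by linarith)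
    simp only [sp_neg] at this
    linarith
  · simp [h, sp_zero]
  · exact key x h

lemma abs_sp (r x : ℝ) (hx : x ≠ 0) : |sp r x| = |x| ^ r := by
  rcases lt_or_gt_of_ne hx with h | h
  · simp [sp, Real.sign_of_neg h, abs_of_nonneg (Real.rpow_nonneg (abs_nonneg x) r)]
  · simp [sp, Real.sign_of_pos h, abs_of_nonneg (Real.rpow_nonneg (abs_nonneg x) r)]

lemma sp_sq {p : ℝ} (hp : 0 < p) (x : ℝ) : sp (p / 2) x ^ 2 = |x| ^ p := by
  by_cases hx : x = 0
  · simp [hx, sp_zero, Real.zero_rpow hp.ne']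
  · rw [← sq_abs, abs_sp _ _ hx, ← Real.rpow_natCast, ← Real.rpow_mul (abs_nonneg x)]
    congr 1
    push_cast; ring

lemma key_pos {s x y : ℝ} (hs : 0 < s) (hs1 : s ≤ 1) (hy : 0 ≤ y) (hxy : y ≤ x) (hx : 0 < x) :
    s * (x - y) ^ 2 ≤ (x ^ s - y ^ s) * (x ^ (2 - s) - y ^ (2 - s)) := by
  have e1 : x ^ (2 - s) = x * x ^ (1 - s) := by
    rw [show (2 - s) = 1 + (1 - s) by ring, Real.rpow_add hx, Real.rpow_one]
  have e2 : y ^ (2 - s) ≤ y * x ^ (1 - s) := by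
    rcases hy.eq_or_lt with h | h
    · rw [← h, Real.zero_rpow (by linarith)]; simp
    · rw [show (2 - s) = 1 + (1 - s) by ring, Real.rpow_add h, Real.rpow_one]
      exact mul_le_mul_of_nonneg_left (Real.rpow_le_rpow hy hxy (by linarith)) hy
  have e3 : y ^ s ≤ x ^ s + s * x ^ (s - 1) * (y - x) := by
    have hb := rpow_one_add_le_one_add_mul_self (s := y / x - 1) (p := s)
      (by have : 0 ≤ y / x := by positivity
          linarith) hs.le hs1
    rw [show 1 + (y / x - 1) = y / x by ring, Real.div_rpow hy hx.le,
      div_le_iff₀ (Real.rpow_pos_of_pos hx s)] at hb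
    have : x ^ s = x ^ (s - 1) * x := by
      rw [← Real.rpow_add_one hx.ne']; congr 1; ring
    refine hb.trans (le_of_eq ?_)
    rw [this]
    field_simp
  have e4 : x ^ (s - 1) * x ^ (1 - s) = 1 := by
    rw [← Real.rpow_add hx]; simp
  have p1 : 0 < x ^ (s - 1) := Real.rpow_pos_of_pos hx _
  have p2 : 0 < x ^ (1 - s) := Real.rpow_pos_of_pos hx _
  calc s * (x - y) ^ 2 = (s * x ^ (s - 1) * (x - y)) * (x ^ (1 - s) * (x - y)) := by
        linear_combination (-(s * (x - y) ^ 2)) * e4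
    _ ≤ _ := by
        have d : 0 ≤ x - y := by linarith
        apply mul_le_mul
        · linarith
        · rw [e1]; linarith
        · positivity
        · have : 0 ≤ s * x ^ (s - 1) * (x - y) := by positivity
          linarith

lemma key_opp {s x y : ℝ} (hs : 0 < s) (hs1 : s ≤ 1) (hy : 0 < y) (hx : 0 < x) :
    s * (x + y) ^ 2 ≤ (x ^ s + y ^ s) * (x ^ (2 - s) + y ^ (2 - s)) := by
  have h : ∀ z : ℝ, 0 < z → ∃ u v : ℝ, 0 < u ∧ 0 < v ∧ z ^ s = u ^ 2 ∧ z ^ (2 - s) = v ^ 2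
      ∧ z = u * v := by
    intro z hz
    refine ⟨z ^ (s / 2), z ^ (1 - s / 2), Real.rpow_pos_of_pos hz _, Real.rpow_pos_of_pos hz _,
      ?_, ?_, ?_⟩
    · rw [← Real.rpow_natCast, ← Real.rpow_mul hz.le]; congr 1; push_cast; ring
    · rw [← Real.rpow_natCast, ← Real.rpow_mul hz.le]; congr 1; push_cast; ring
    · rw [← Real.rpow_add hz]; simp
  obtain ⟨u, v, hu, hv, a1, a2, a3⟩ := h x hx
  obtain ⟨u', v', hu', hv', b1, b2, b3⟩ := h y hy
  rw [a1, a2, b1, b2]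
  calc s * (x + y) ^ 2 ≤ 1 * (x + y) ^ 2 := by gcongr
    _ = (u * v + u' * v') ^ 2 := by rw [a3, b3, one_mul]
    _ ≤ _ := by nlinarith [sq_nonneg (u * v' - u' * v)]

lemma key {s : ℝ} (hs : 0 < s) (hs1 : s ≤ 1) (x y : ℝ) :
    s * (x - y) ^ 2 ≤ (sp s x - sp s y) * (sp (2 - s) x - sp (2 - s) y) := by
  have z1 : (0 : ℝ) ^ s = 0 := Real.zero_rpow hs.ne'
  have z2 : (0 : ℝ) ^ (2 - s) = 0 := Real.zero_rpow (by linarith)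
  have spn : ∀ {r z : ℝ}, (0 : ℝ) ^ r = 0 → 0 ≤ z → sp r z = z ^ r := by
    intro r z hr hz
    rcases hz.eq_or_lt with h | h
    · rw [← h, sp_zero, hr]
    · exact sp_of_pos h
  have main : ∀ x y : ℝ, y ≤ x → 0 < x →
      s * (x - y) ^ 2 ≤ (sp s x - sp s y) * (sp (2 - s) x - sp (2 - s) y) := by
    intro x y hxy hx
    rcases le_or_gt 0 y with hy | hy
    · rw [spn z1 hy, spn z2 hy, spn z1 hx.le, spn z2 hx.le]
      exact key_pos hs hs1 hy hxy hx
    · have := key_opp hs hs1 (neg_pos.mpr hy) hx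
      have q1 := sp_neg s y
      have q2 := sp_neg (2 - s) y
      rw [sp_of_pos (neg_pos.mpr hy)] at q1 q2
      rw [sp_of_pos hx, sp_of_pos hx]
      rw [q1, q2] at this
      linarith
  have main2 : ∀ x y : ℝ, y ≤ x →
      s * (x - y) ^ 2 ≤ (sp s x - sp s y) * (sp (2 - s) x - sp (2 - s) y) := by
    intro x y hxy
    rcases lt_or_ge 0 x with hx | hx
    · exact main x y hxy hx
    · rcases (hxy.trans hx).eq_or_lt with hy | hy
      · have : x = 0 := by linarith
        simp [hy, this]
      · have := main (-y) (-x) (by linarith) (by linarith)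
        simp only [sp_neg] at this
        linarith
  rcases le_total y x with h | h
  · exact main2 x y h
  · have := main2 y x h
    linarith

lemma key_p {p : ℝ} (hp : 1 < p) (a b : ℝ) :
    2 * min (1 / p) (1 / (p / (p - 1))) * (sp (p / 2) a - sp (p / 2) b) ^ 2
      ≤ (a - b) * (sp (p - 1) a - sp (p - 1) b) := by
  have hp0 : 0 < p := by linarith
  rw [one_div_div]
  rcases le_total 2 p with h | h
  · rw [min_eq_left (by gcongr; linarith)]
    have := key (s := 2 * (1 / p)) (by positivity)
      (by rw [mul_one_div, div_le_one hp0]; exact h) (sp (p / 2) a) (sp (p / 2) b)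
    simp only [sp_sp] at this
    rw [show p / 2 * (2 * (1 / p)) = 1 by field_simp,
      show p / 2 * (2 - 2 * (1 / p)) = p - 1 by field_simp] at this
    simpa only [sp_one] using this
  · rw [min_eq_right (by gcongr; linarith)]
    have hp1 : 0 < p - 1 := by linarith
    have := key (s := 2 * ((p - 1) / p)) (by positivity)
      (by rw [← mul_div_assoc, div_le_one hp0]; linarith) (sp (p / 2) a) (sp (p / 2) b)
    simp only [sp_sp] at this
    rw [show p / 2 * (2 * ((p - 1) / p)) = p - 1 by field_simp,
      show p / 2 * (2 - 2 * ((p - 1) / p)) = 1 by field_simp; ring] at this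
    simp only [sp_one] at this
    linarith

lemma pointwise {r μ g : ℝ} (hr : 0 < r) (hr2 : r < 2) (hμ : 3 / 4 ≤ μ) :
    (1 / 2 : ℝ) ^ r * (1 - 16 * (g - μ) ^ 2) ≤ sp r g := by
  have c0 : 0 < (1 / 2 : ℝ) ^ r := by positivity
  have c1 : (1 / 4 : ℝ) ≤ (1 / 2 : ℝ) ^ r := by
    have : (1 / 2 : ℝ) ^ (2 : ℝ) ≤ (1 / 2 : ℝ) ^ r :=
      Real.rpow_le_rpow_of_exponent_ge (by norm_num) (by norm_num) hr2.le
    norm_num at this ⊢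
    exact this
  rcases le_or_gt (1 / 2) g with h | h
  · rw [sp_of_pos (by linarith)]
    have : (1 / 2 : ℝ) ^ r ≤ g ^ r := Real.rpow_le_rpow (by norm_num) h hr.le
    nlinarith [sq_nonneg (g - μ), mul_nonneg c0.le (sq_nonneg (g - μ))]
  · have h1 : (1 - 16 * (g - μ) ^ 2) ≤ 0 := by nlinarith
    rcases le_or_gt 0 g with h0 | h0
    · have : 0 ≤ sp r g := by
        rcases h0.eq_or_lt with e | e
        · rw [← e, sp_zero]
        · rw [sp_of_pos e]; positivity
      nlinarith
    · have h2 : sp r g = -((-g) ^ r) := by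
        rw [← sp_of_pos (neg_pos.mpr h0), sp_neg, neg_neg]
      have h3 : (-g) ^ r ≤ 16 / 9 * (g - μ) ^ 2 := by
        rcases le_total (-g) 1 with l | l
        · have : (-g) ^ r ≤ 1 := Real.rpow_le_one (by linarith) l hr.le
          nlinarith
        · have : (-g) ^ r ≤ (-g) ^ (2 : ℝ) := Real.rpow_le_rpow_of_exponent_le l hr2.le
          rw [Real.rpow_two] at this
          nlinarith
      rw [h2]
      nlinarith

lemma normalized {n : ℕ} {p : ℝ} (hp : 1 < p) (g : (Fin n → Bool) → ℝ)
    (h1 : cubeE (fun x => g x ^ 2) = 1) (h0 : 0 ≤ cubeE g) :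
    1 / 64 ≤ (1 - (cubeE g) ^ 2) + (2 : ℝ) ^ (p / 2) * |cubeE (fun x => sp (2 / p) (g x))| ^ p := by
  have hp0 : 0 < p := by linarith
  set μ := cubeE g with hμ
  have hvar : cubeE (fun x => (g x - μ) ^ 2) = 1 - μ ^ 2 := by
    have : (fun x => (g x - μ) ^ 2) = fun x => g x ^ 2 + ((-2 * μ) * g x + μ ^ 2) := by
      funext x; ring
    rw [this, cubeE_add, cubeE_add, cubeE_mul, cubeE_const, h1, ← hμ]
    ring
  rcases le_or_gt (1 / 64) (1 - μ ^ 2) with h | h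
  · have : 0 ≤ (2 : ℝ) ^ (p / 2) * |cubeE (fun x => sp (2 / p) (g x))| ^ p := by positivity
    linarith
  · have hv0 : 0 ≤ 1 - μ ^ 2 := by
      rw [← hvar, ← cubeE_const (n := n) 0]
      exact cubeE_mono fun x => sq_nonneg _
    have hm : 3 / 4 ≤ μ := by nlinarith
    have hE : (1 / 2 : ℝ) ^ (2 / p) * (3 / 4) ≤ cubeE (fun x => sp (2 / p) (g x)) := by
      have := cubeE_mono (fun x => pointwise (r := 2 / p) (g := g x) (by positivity)
        (by rw [div_lt_iff₀ hp0]; linarith) hm)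
      refine le_trans ?_ this
      have e : (fun x => (1 - 16 * (g x - μ) ^ 2)) = fun x => 1 + (-16) * (g x - μ) ^ 2 := by
        funext x; ring
      rw [cubeE_mul, e, cubeE_add, cubeE_const, cubeE_mul, hvar]
      gcongr
      linarith
    have hP : ((1 / 2 : ℝ) ^ (2 / p) * (3 / 4)) ^ p ≤ |cubeE (fun x => sp (2 / p) (g x))| ^ p :=
      Real.rpow_le_rpow (by positivity) (hE.trans (le_abs_self _)) hp0.le
    have hQ : (1 / 4 : ℝ) ≤ (2 : ℝ) ^ (p / 2) * ((1 / 2 : ℝ) ^ (2 / p) * (3 / 4)) ^ p := by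
      rw [Real.mul_rpow (by positivity) (by positivity), ← Real.rpow_mul (by norm_num),
        div_mul_cancel₀ _ hp0.ne', Real.rpow_two]
      have e1 : (3 / 4 : ℝ) ^ p = ((3 / 4 : ℝ) ^ 2) ^ (p / 2) := by
        rw [← Real.rpow_natCast, ← Real.rpow_mul (by norm_num)]
        congr 1; push_cast; ring
      have e2 : (1 : ℝ) ≤ (2 : ℝ) ^ (p / 2) * (3 / 4 : ℝ) ^ p := by
        rw [e1, ← Real.mul_rpow (by norm_num) (by norm_num)]
        exact Real.one_le_rpow (by norm_num) (by positivity)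
      nlinarith
    have : (2 : ℝ) ^ (p / 2) * ((1 / 2 : ℝ) ^ (2 / p) * (3 / 4)) ^ p
      ≤ (2 : ℝ) ^ (p / 2) * |cubeE (fun x => sp (2 / p) (g x))| ^ p := by gcongr
    linarith

lemma core {n : ℕ} {p : ℝ} (hp : 1 < p) (f : (Fin n → Bool) → ℝ) :
    1 / 64 * cubeE (fun x => |f x| ^ p) ≤
      (cubeE (fun x => |f x| ^ p) - (cubeE (fun x => sp (p / 2) (f x))) ^ 2)
        + (2 : ℝ) ^ (p / 2) * |cubeE f| ^ p := by
  have hp0 : 0 < p := by linarith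
  have hA : cubeE (fun x => |f x| ^ p) = cubeE (fun x => sp (p / 2) (f x) ^ 2) := by
    congr 1; funext x; rw [sp_sq hp0]
  rw [hA]
  set g : (Fin n → Bool) → ℝ := fun x => sp (p / 2) (f x) with hg
  have hfg : f = fun x => sp (2 / p) (g x) := by
    funext x
    simp only [hg, sp_sp]
    rw [show p / 2 * (2 / p) = 1 by field_simp, sp_one]
  set A := cubeE (fun x => g x ^ 2) with hAd
  have hA0 : 0 ≤ A := by
    rw [hAd, ← cubeE_const (n := n) 0]
    exact cubeE_mono fun x => sq_nonneg _
  rcases hA0.eq_or_lt with h | h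
  · have hg0 : g = fun _ => 0 := by
      have hs : ∑ x, g x ^ 2 = 0 := by
        have : A = (∑ x, g x ^ 2) / 2 ^ n := rfl
        rw [← h] at this
        have h2 : (2 : ℝ) ^ n ≠ 0 := by positivity
        field_simp at this
        linarith
      rw [Finset.sum_eq_zero_iff_of_nonneg (fun x _ => sq_nonneg _)] at hs
      funext x
      have := hs x (Finset.mem_univ x)
      exact pow_eq_zero_iff (two_ne_zero) |>.mp this
    rw [← h]
    change _ ≤ 0 - cubeE g ^ 2 + _
    rw [hg0, cubeE_const]
    have : 0 ≤ (2 : ℝ) ^ (p / 2) * |cubeE f| ^ p := by positivity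
    linarith
  · obtain ⟨l, hl, hl0⟩ : ∃ l : ℝ, l ^ 2 * A = 1 ∧ 0 ≤ l * cubeE g := by
      have hs : (Real.sqrt A)⁻¹ ^ 2 * A = 1 := by
        rw [inv_pow, Real.sq_sqrt hA0]; field_simp
      rcases le_total 0 (cubeE g) with e | e
      · exact ⟨(Real.sqrt A)⁻¹, hs, by positivity⟩
      · refine ⟨-(Real.sqrt A)⁻¹, by rw [neg_sq]; exact hs, ?_⟩
        rw [neg_mul_comm]
        exact mul_nonneg (by positivity) (by linarith)
    have hne : l ≠ 0 := by rintro rfl; norm_num at hl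
    have N := normalized hp (fun x => l * g x)
      (by
        have : (fun x => (l * g x) ^ 2) = fun x => l ^ 2 * g x ^ 2 := by funext x; ring
        rw [this, cubeE_mul]; exact hl)
      (by rw [cubeE_mul]; exact hl0)
    simp only [sp_mul] at N
    rw [cubeE_mul, cubeE_mul, ← hfg, abs_mul, abs_sp _ _ hne,
      Real.mul_rpow (by positivity) (by positivity), ← Real.rpow_mul (abs_nonneg _),
      div_mul_cancel₀ _ hp0.ne', Real.rpow_two, sq_abs] at N
    have l2 : 0 < l ^ 2 := by positivity
    refine le_of_mul_le_mul_left ?_ l2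
    change l ^ 2 * (1 / 64 * A) ≤ l ^ 2 * (A - cubeE g ^ 2 + _)
    nlinarith

/-- There is an absolute constant `C₁ > 0` such that for every `1 < p < ∞`
(with conjugate exponent `p' = p/(p-1)` and `c_p = 2 min(1/p, 1/p')`), every `n`
and every `f : C_n → ℝ`:
`-E(Δf · |f|^{p-1} sgn f) ≥ C₁ c_p E|f|^p - 2^{p/2} c_p |E f|^p`. -/
theorem stmt4 :
    ∃ C₁ : ℝ, 0 < C₁ ∧
      ∀ p : ℝ, 1 < p →
        ∀ (n : ℕ) (f : (Fin n → Bool) → ℝ),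
          -cubeE (fun x => lap f x * (|f x| ^ (p - 1) * Real.sign (f x))) ≥
            C₁ * (2 * min (1 / p) (1 / (p / (p - 1)))) * cubeE (fun x => |f x| ^ p) -
              (2 : ℝ) ^ (p / 2) * (2 * min (1 / p) (1 / (p / (p - 1)))) * |cubeE f| ^ p := by
  refine ⟨1 / 64, by norm_num, ?_⟩
  intro p hp n f
  have hp0 : 0 < p := by linarith
  have hc := key_p hp
  have hc0 : 0 ≤ 2 * min (1 / p) (1 / (p / (p - 1))) := by
    have : 0 < p - 1 := by linarith
    positivity
  set c := 2 * min (1 / p) (1 / (p / (p - 1))) with hcd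
  have hcore := core hp f
  have hpo := poincare (fun x => sp (p / 2) (f x))
  simp only [sp_sq hp0] at hpo
  have hd : c * -cubeE (fun x => lap (fun x => sp (p / 2) (f x)) x * sp (p / 2) (f x)) ≤
      -cubeE (fun x => lap f x * sp (p - 1) (f x)) := by
    rw [dirichlet, dirichlet f (fun x => sp (p - 1) (f x)), ← mul_div_assoc]
    apply div_le_div_of_nonneg_right _ (by positivity)
    rw [Finset.mul_sum]
    apply Finset.sum_le_sum
    intro j _
    rw [Finset.mul_sum]
    apply Finset.sum_le_sum
    intro x _
    have := hc (f x) (f (flp j x))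
    linarith
  change -cubeE (fun x => lap f x * sp (p - 1) (f x)) ≥ _
  have h1 := mul_le_mul_of_nonneg_left hpo hc0
  have h2 := mul_le_mul_of_nonneg_left hcore hc0
  linarith
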